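/- The group Homeo(ω₁), with the topology of pointwise convergence, is Roelcke-precompact: for every identity neighbourhood U there is a finite subset F ⊆ Homeo(ω₁) with Homeo(ω₁) = U F U. -/

import Mathlib

/-!
The result uses only that `ω₁` is totally separated, i.e. distinct points are separated by a clopen
set. Write `G` for the homeomorphism group and `H` for the pointwise stabilizer of a finite set `A`;
every identity neighbourhood contains such an `H`, so it suffices that `H` has finitely many double
cosets.

If `g x = y` and `C` is a finite set avoiding `x` and `y`, some homeomorphism fixing `C` pointwise
carries `x` to `y`: interchange a small clopen neighbourhood `V` of `x` with `g V` along `g` and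
fix everything else (`exists_homeo_fixing`). Hence, when `g, g' ∈ G` meet `A` in the same way (that
is, `g a = b ↔ g' a = b` for all `a, b ∈ A`), the values `g a` can be moved to `g' a` one after
another by elements of `H` (`exists_stabilizer_transport`). This puts `g'` in `H g H`, so a double
coset is determined by a subset of `A × A`, of which there are finitely many.
-/


noncomputable section
open Ordinal Set Topology Pointwise

/-- The first uncountable ordinal `ω₁`, as a type, endowed with the order topology. -/
def Omega1 : Type 1 := Set.Iio (Ordinal.omega 1)

instance : LinearOrder Omega1 := inferInstanceAs (LinearOrder (Set.Iio (Ordinal.omega 1)))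
instance : TopologicalSpace Omega1 := Preorder.topology Omega1
instance : OrderTopology Omega1 := ⟨rfl⟩

/-- The underlying ordinal of a point of `ω₁`. -/
def Omega1.toOrdinal (x : Omega1) : Ordinal := Subtype.val x

theorem Omega1.toOrdinal_lt (x : Omega1) : x.toOrdinal < Ordinal.omega 1 := Subtype.prop x

/-- Build a point of `ω₁` from a countable ordinal. -/
def Omega1.mk (o : Ordinal) (h : o < Ordinal.omega 1) : Omega1 := Subtype.mk o h

/-- The group structure on the self-homeomorphism group of a topological space. -/
instance {X : Type*} [TopologicalSpace X] : Group (X ≃ₜ X) where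
  mul g h := h.trans g
  one := Homeomorph.refl X
  inv := Homeomorph.symm
  mul_assoc _ _ _ := Homeomorph.ext fun _ => rfl
  one_mul _ := Homeomorph.ext fun _ => rfl
  mul_one _ := Homeomorph.ext fun _ => rfl
  inv_mul_cancel g := Homeomorph.ext fun x => g.symm_apply_apply x

/-- The topology of pointwise convergence on the homeomorphism group of `ω₁`. -/
instance : TopologicalSpace (Omega1 ≃ₜ Omega1) :=
  TopologicalSpace.induced (fun g : Omega1 ≃ₜ Omega1 => (g : Omega1 → Omega1))
    Pi.topologicalSpace

namespace RoelckeAux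

variable {X : Type*} [TopologicalSpace X]

theorem mul_apply (g h : X ≃ₜ X) (x : X) : (g * h) x = g (h x) := rfl

theorem inv_apply_self' (g : X ≃ₜ X) (x : X) : g⁻¹ (g x) = x := g.symm_apply_apply x

theorem apply_inv_self' (g : X ≃ₜ X) (x : X) : g (g⁻¹ x) = x := g.apply_symm_apply x

theorem exists_clopen_avoiding [TotallySeparatedSpace X] {C : Set X} (hC : C.Finite) {x : X}
    (hx : x ∉ C) : ∃ V : Set X, IsClopen V ∧ x ∈ V ∧ Disjoint V C := by
  induction C, hC using Set.Finite.induction_on with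
  | empty => exact ⟨univ, isClopen_univ, mem_univ x, disjoint_empty _⟩
  | @insert c C _ _ ih =>
    rw [mem_insert_iff, not_or] at hx
    obtain ⟨V, hV, hxV, hVC⟩ := ih hx.2
    obtain ⟨W, hW, hxW, hcW⟩ := exists_isClopen_of_totally_separated hx.1
    refine ⟨V ∩ W, hV.inter hW, ⟨hxV, hxW⟩, ?_⟩
    rw [Set.disjoint_insert_right]
    exact ⟨fun h => hcW h.2, hVC.mono_left inter_subset_left⟩

open Classical in
/-- The involution interchanging `V` with `g V` along `g` and fixing every other point. -/
def swapFun (g : X ≃ₜ X) (V : Set X) : X → X :=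
  V.piecewise g ((g '' V).piecewise g.symm id)

theorem swapFun_continuous (g : X ≃ₜ X) {V : Set X} (hV : IsClopen V) :
    Continuous (swapFun g V) := by
  have hgV : IsClopen (g '' V) := ⟨g.isClosedMap _ hV.1, g.isOpenMap _ hV.2⟩
  classical
  refine Continuous.piecewise ?_ g.continuous (Continuous.piecewise ?_ g.symm.continuous
    continuous_id)
  · simp [hV.frontier_eq]
  · simp [hgV.frontier_eq]

theorem swapFun_involutive (g : X ≃ₜ X) {V : Set X} (hd : Disjoint V (g '' V)) :
    Function.Involutive (swapFun g V) := by
  intro z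
  by_cases h1 : z ∈ V
  · have h2 : g z ∈ g '' V := mem_image_of_mem g h1
    have h3 : g z ∉ V := fun h => hd.notMem_of_mem_left h h2
    simp [swapFun, h1, h3]
  · by_cases h2 : z ∈ g '' V
    · obtain ⟨w, hw, rfl⟩ := h2
      simp [swapFun, h1, hw]
    · simp only [swapFun, Set.piecewise, h1, h2, if_false, id]

/-- Within an orbit of the homeomorphism group, a point can be moved to another while fixing any
finite set that avoids both. -/
theorem exists_homeo_fixing [TotallySeparatedSpace X] (g : X ≃ₜ X) {x : X} {C : Set X}
    (hC : C.Finite) (hx : x ∉ C) (hy : g x ∉ C) :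
    ∃ h : X ≃ₜ X, h x = g x ∧ ∀ c ∈ C, h c = c := by
  by_cases hxy : x = g x
  · exact ⟨1, hxy, fun _ _ => rfl⟩
  obtain ⟨V₀, hV₀, hxV₀, hd₀⟩ := exists_clopen_avoiding (hC.insert (g x))
    (x := x) (by simp [hxy, hx])
  obtain ⟨W₁, hW₁, hyW₁, hd₁⟩ := exists_clopen_avoiding hC hy
  obtain ⟨hyV₀, hCV₀⟩ := Set.disjoint_insert_right.1 hd₀
  -- `V` is small enough that `V` lies in `V₀` and its image in `W₁ \ V₀`.
  set V : Set X := V₀ ∩ g ⁻¹' (W₁ \ V₀) with hVdef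
  have hV : IsClopen V := hV₀.inter ((hW₁.diff hV₀).preimage g.continuous)
  have hxV : x ∈ V := ⟨hxV₀, hyW₁, hyV₀⟩
  have himg : g '' V ⊆ W₁ \ V₀ := by
    rintro _ ⟨z, hz, rfl⟩
    exact hz.2
  have hd : Disjoint V (g '' V) :=
    Set.disjoint_left.2 fun z hz hz' => (himg hz').2 hz.1
  let h : X ≃ₜ X :=
    { (swapFun_involutive g hd).toPerm with
      continuous_toFun := swapFun_continuous g hV
      continuous_invFun := swapFun_continuous g hV }
  refine ⟨h, ?_, fun c hc => ?_⟩
  · change swapFun g V x = g x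
    simp [swapFun, hxV]
  · change swapFun g V c = c
    have h1 : c ∉ V := fun h => hCV₀.notMem_of_mem_left h.1 hc
    have h2 : c ∉ g '' V := fun h => hd₁.notMem_of_mem_left (himg h).1 hc
    simp only [swapFun, Set.piecewise, h1, h2, if_false, id]

theorem exists_stabilizer_transport [TotallySeparatedSpace X] {A : Set X} (hA : A.Finite)
    {g g' : X ≃ₜ X} (hp : ∀ a ∈ A, ∀ b ∈ A, g a = b ↔ g' a = b) {S : Set X} (hS : S.Finite)
    (hSA : S ⊆ A) :
    ∃ h : X ≃ₜ X, (∀ a ∈ A, h a = a) ∧ ∀ a ∈ S, h (g a) = g' a := by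
  induction S, hS using Set.Finite.induction_on with
  | empty => exact ⟨1, fun _ _ => rfl, fun a ha => ha.elim⟩
  | @insert a S haS hS ih =>
    obtain ⟨h, hhA, hhS⟩ := ih ((subset_insert a S).trans hSA)
    have haA : a ∈ A := hSA (mem_insert a S)
    by_cases hga : g a ∈ A
    · refine ⟨h, hhA, ?_⟩
      rintro b (rfl | hb)
      · rw [hhA _ hga]
        exact ((hp b haA _ hga).1 rfl).symm
      · exact hhS b hb
    · have hg'a : g' a ∉ A := fun hh => hga (((hp a haA _ hh).2 rfl) ▸ hh)
      have hxA : h (g a) ∉ A := fun hh => hga ((h.injective (hhA _ hh)) ▸ hh)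
      have hxS : h (g a) ∉ g' '' S := by
        rintro ⟨s, hs, hse⟩
        rw [← hhS s hs] at hse
        exact haS (g.injective (h.injective hse) ▸ hs)
      have hyS : g' a ∉ g' '' S := by
        rintro ⟨s, hs, hse⟩
        exact haS (g'.injective hse ▸ hs)
      have hval : (g' * g⁻¹ * h⁻¹) (h (g a)) = g' a := by
        simp only [mul_apply, inv_apply_self']
      obtain ⟨k, hk, hkC⟩ := exists_homeo_fixing (g' * g⁻¹ * h⁻¹) (x := h (g a))
        (C := A ∪ g' '' S) (hA.union (hS.image _)) (fun hh => hh.elim hxA hxS)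
        (by rw [hval]; exact fun hh => hh.elim hg'a hyS)
      refine ⟨k * h, fun b hb => ?_, ?_⟩
      · rw [mul_apply, hhA b hb, hkC b (Or.inl hb)]
      · rintro b (rfl | hb)
        · rw [mul_apply, hk, hval]
        · rw [mul_apply, hhS b hb, hkC _ (Or.inr (mem_image_of_mem _ hb))]

/-- The pointwise stabilizer of a finite set has finitely many double cosets. -/
theorem finite_double_cosets [TotallySeparatedSpace X] {A : Set X} (hA : A.Finite) :
    ∃ F : Set (X ≃ₜ X), F.Finite ∧ ∀ g' : X ≃ₜ X, ∃ h g k : X ≃ₜ X,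
      (∀ a ∈ A, h a = a) ∧ g ∈ F ∧ (∀ a ∈ A, k a = a) ∧ h * g * k = g' := by
  have := hA.to_subtype
  let pat : (X ≃ₜ X) → Set (A × A) := fun g => {p | g p.1 = p.2}
  have hinv : ∀ g, pat (Function.invFun pat (pat g)) = pat g := fun g =>
    Function.invFun_eq ⟨g, rfl⟩
  refine ⟨range (Function.invFun pat), finite_range _, fun g' => ?_⟩
  set g := Function.invFun pat (pat g') with hg
  have hp : ∀ a ∈ A, ∀ b ∈ A, g a = b ↔ g' a = b := fun a ha b hb =>
    Set.ext_iff.1 (hinv g') (⟨a, ha⟩, ⟨b, hb⟩)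
  obtain ⟨h, hhA, hh⟩ := exists_stabilizer_transport hA hp hA subset_rfl
  refine ⟨h, g, g⁻¹ * h⁻¹ * g', hhA, mem_range_self _, fun a ha => ?_, by group⟩
  rw [mul_apply, mul_apply, ← hh a ha, inv_apply_self', inv_apply_self']

theorem isClopen_Iic_omega1 (x : Omega1) : IsClopen (Iic x) := by
  have : WellFoundedLT Omega1 := inferInstanceAs (WellFoundedLT (Set.Iio (Ordinal.omega 1)))
  refine ⟨isClosed_Iic, ?_⟩
  by_cases hne : (Ioi x).Nonempty
  · -- The least element `m` above `x` gives `Iic x = Iio m`.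
    have hm := wellFounded_lt.min_mem (Ioi x) hne
    have : Iic x = Iio (wellFounded_lt.min (Ioi x) hne) := by
      ext z
      refine ⟨fun hz => mem_Iio.2 (lt_of_le_of_lt (mem_Iic.1 hz) (mem_Ioi.1 hm)), fun hz => ?_⟩
      by_contra hzx
      exact wellFounded_lt.not_lt_min (Ioi x) (mem_Ioi.2 (not_le.1 hzx)) (mem_Iio.1 hz)
    rw [this]
    exact isOpen_Iio
  · have : Iic x = Set.univ := by
      ext z
      simpa using not_lt.1 fun hz => hne ⟨z, mem_Ioi.2 hz⟩
    rw [this]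
    exact isOpen_univ

theorem totallySeparated_omega1 : TotallySeparatedSpace Omega1 := by
  rw [totallySeparatedSpace_iff_exists_isClopen]
  intro x y hxy
  rcases lt_or_gt_of_ne hxy with h | h
  · exact ⟨Iic x, isClopen_Iic_omega1 x, self_mem_Iic, by simpa using h⟩
  · exact ⟨(Iic y)ᶜ, (isClopen_Iic_omega1 y).compl, by simpa using h, by simp⟩

end RoelckeAux

/-- The group `Homeo(ω₁)` is Roelcke-precompact: for every identity
neighbourhood `U` there is a finite set `F` with `G = U F U`. -/
theorem homeoOmega1_roelckePrecompact :
    ∀ U ∈ nhds (1 : Omega1 ≃ₜ Omega1),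
      ∃ F : Set (Omega1 ≃ₜ Omega1), F.Finite ∧ U * F * U = Set.univ := by
  intro U hU
  have := RoelckeAux.totallySeparated_omega1
  rw [nhds_induced, Filter.mem_comap] at hU
  obtain ⟨t, ht, htU⟩ := hU
  rw [nhds_pi, Filter.mem_pi] at ht
  obtain ⟨A, hA, s, hs, hst⟩ := ht
  have hstab : ∀ h : Omega1 ≃ₜ Omega1, (∀ a ∈ A, h a = a) → h ∈ U := fun h hh =>
    htU (hst fun a ha => by
      change h a ∈ s a
      rw [hh a ha]
      exact mem_of_mem_nhds (hs a))
  obtain ⟨F, hF, hcov⟩ := RoelckeAux.finite_double_cosets hA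
  refine ⟨F, hF, eq_univ_of_forall fun g' => ?_⟩
  obtain ⟨h, g, k, hh, hg, hk, rfl⟩ := hcov g'
  exact Set.mul_mem_mul (Set.mul_mem_mul (hstab h hh) hg) (hstab k hk)
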